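/- Let ν be a probability measure on [-π,π] with density p, and for r ≥ 1 define the r-fold circular convolution constraint sum S_r := Σ_{(m_1,...,m_r) ∈ ℤ^r, m_1+⋯+m_r = 0} Π_{k=1}^r a(m_k), where a(m) = ∫_{-π}^{π} e^{imx} p(x) dx. If p ∈ L^r([-π,π]) and all a(m) ≥ 0, then S_r converges and S_r = (2π)^{r-1} ∫_{-π}^{π} p(x)^r dx. -/

import Mathlib

open Real MeasureTheory Set

/-!
A bounded function `f` on the circle whose Fourier coefficients are nonnegative has summable
Fourier coefficients: integrating `f` against `‖∑ j ∈ s, fourier j‖ ^ 2` gives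
`∑ j ∈ s, ∑ k ∈ s, fourierCoeff f (j - k) ≤ #s * ‖f‖_∞`, and for an interval `s` the left side
contains each coefficient of small index about `#s` times. A continuous such `f` is therefore the
pointwise sum of its Fourier series, in particular at `0`.

For `f ∈ L^p` and `g ∈ L^q` with conjugate exponents, the convolution of `f` with
`t ↦ fourier n t * g (-t)` is continuous, its `m`-th coefficient is
`fourierCoeff f m * fourierCoeff g (n - m)`, and its value at `0` is `fourierCoeff (f * g) n`. So
the coefficients of `f * g` are the convolution of those of `f` and `g` whenever the latter are
nonnegative. Induction on the number of factors expresses the coefficients of `f ^ r` as sums over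
hyperplanes of `ℤ ^ r`, and the coefficient of index `0` is the integral.
-/

open AddCircle
open scoped ENNReal ComplexOrder Convolution

section Sums

theorem hasSum_sigma_of_nonneg {ι : Type*} {β : ι → Type*} {f : (Σ i, β i) → ℂ} {g : ι → ℂ}
    {a : ℂ} (h0 : ∀ x, 0 ≤ f x) (hf : ∀ i, HasSum (fun y => f ⟨i, y⟩) (g i)) (hg : HasSum g a) :
    HasSum f a := by
  obtain ⟨r, rfl⟩ : ∃ r : (Σ i, β i) → ℝ, f = fun x => (r x : ℂ) :=
    ⟨fun x => ‖f x‖, funext fun x => Complex.eq_coe_norm_of_nonneg (h0 x)⟩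
  have hr (i : ι) : HasSum (fun y => r ⟨i, y⟩) (g i).re := Complex.hasSum_re (hf i)
  have hsum : Summable r := by
    refine (summable_sigma_of_nonneg (by simpa using h0)).2 ⟨fun i => (hr i).summable, ?_⟩
    simpa only [(hr _).tsum_eq] using (Complex.hasSum_re hg).summable
  have hsum' : Summable fun x => (r x : ℂ) := Complex.summable_ofReal.2 hsum
  exact (hsum'.hasSum.sigma hf).unique hg ▸ hsum'.hasSum

theorem mul_sum_le_sum_sum_sub {R : Type*} [Semiring R] [PartialOrder R] [IsOrderedRing R]
    {c : ℤ → R} (h0 : ∀ n, 0 ≤ c n) {N : ℕ} {u : Finset ℤ} (hu : u ⊆ Finset.Icc (-N) N) :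
    (2 * N + 1) * ∑ n ∈ u, c n ≤
      ∑ j ∈ Finset.Icc (-(2 * N) : ℤ) (2 * N), ∑ k ∈ Finset.Icc (-(2 * N) : ℤ) (2 * N),
        c (j - k) := by
  have hrow (j : ℤ) (hj : j ∈ Finset.Icc (-N : ℤ) N) :
      ∑ n ∈ u, c n ≤ ∑ k ∈ Finset.Icc (-(2 * N) : ℤ) (2 * N), c (j - k) := by
    calc ∑ n ∈ u, c n = ∑ k ∈ u.image (j - ·), c (j - k) := by
          rw [Finset.sum_image sub_right_injective.injOn]
          simp
      _ ≤ _ := by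
          refine Finset.sum_le_sum_of_subset_of_nonneg (fun k hk => ?_) fun k _ _ => h0 _
          obtain ⟨n, hn, rfl⟩ := Finset.mem_image.1 hk
          have := Finset.mem_Icc.1 (hu hn)
          rw [Finset.mem_Icc] at hj ⊢
          lia
  calc (2 * N + 1) * ∑ n ∈ u, c n = ∑ _j ∈ Finset.Icc (-N : ℤ) N, ∑ n ∈ u, c n := by
        have hcard : (Finset.Icc (-N : ℤ) N).card = 2 * N + 1 := by
          rw [Int.card_Icc]
          lia
        rw [Finset.sum_const, hcard, nsmul_eq_mul]
        push_cast
        rfl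
    _ ≤ ∑ j ∈ Finset.Icc (-N : ℤ) N, ∑ k ∈ Finset.Icc (-(2 * N) : ℤ) (2 * N), c (j - k) :=
        Finset.sum_le_sum hrow
    _ ≤ _ := Finset.sum_le_sum_of_subset_of_nonneg
        (Finset.Icc_subset_Icc (by lia) (by lia)) fun j _ _ => Finset.sum_nonneg fun k _ => h0 _

/-- The hyperplane `∑ i, v i = n` in `A ^ (k + 1)`, parametrized by its first `k` coordinates, the
last one being solved for. It is used to sum over the hyperplane one coordinate at a time. -/
def hyperplaneEquiv {A : Type*} [AddCommGroup A] (k : ℕ) (n : A) :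
    (Fin k → A) ≃ {v : Fin (k + 1) → A // ∑ i, v i = n} where
  toFun w := ⟨Fin.snoc w (n - ∑ i, w i), by simp [Fin.sum_univ_castSucc]⟩
  invFun v := Fin.init v.1
  left_inv w := by simp
  right_inv := by
    rintro ⟨v, rfl⟩
    simp [Fin.sum_univ_castSucc, Fin.init]

theorem hasSum_prod_hyperplane_succ {A : Type*} [AddCommGroup A] {k : ℕ}
    {c : Fin (k + 1) → A → ℂ} {b : A → ℂ} {s : ℂ} {n : A} (h0 : ∀ i m, 0 ≤ c i m)
    (hinit : ∀ m, HasSum (fun w : {w : Fin k → A // ∑ i, w i = m} => ∏ i, c i.castSucc (w.1 i))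
      (b m))
    (hlast : HasSum (fun m => b m * c (.last k) (n - m)) s) :
    HasSum (fun v : {v : Fin (k + 1) → A // ∑ i, v i = n} => ∏ i, c i (v.1 i)) s := by
  have hterm (m : A) (w : {w : Fin k → A // ∑ i, w i = m}) :
      ∏ i, c i ((hyperplaneEquiv k n w.1).1 i) =
        (∏ i, c i.castSucc (w.1 i)) * c (.last k) (n - m) := by
    simp [hyperplaneEquiv, Fin.prod_univ_castSucc, w.2]
  refine (hyperplaneEquiv k n).hasSum_iff.1 <|
    (Equiv.sigmaFiberEquiv fun w : Fin k → A => ∑ i, w i).hasSum_iff.1 <|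
    hasSum_sigma_of_nonneg (fun x => Finset.prod_nonneg (s := .univ) fun i _ => h0 i _)
      (fun m => ?_) hlast
  have hrow := (hinit m).mul_right (c (.last k) (n - m))
  rwa [← funext (hterm m)] at hrow

end Sums

theorem memLp_natCast_iff_integrable_pow {α 𝕜 : Type*} {_ : MeasurableSpace α} {μ : Measure α}
    [NormedDivisionRing 𝕜] {f : α → 𝕜} {r : ℕ} (hr : r ≠ 0) (hf : AEStronglyMeasurable f μ) :
    MemLp f r μ ↔ Integrable (fun x => f x ^ r) μ := by
  rw [← integrable_norm_rpow_iff hf (by exact_mod_cast hr) (ENNReal.natCast_ne_top r),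
    ← integrable_norm_iff (f := fun x => f x ^ r) (hf.pow r)]
  simp

section Convolution

variable {G 𝕜 E E' F : Type*} [AddCommGroup G] [TopologicalSpace G] [IsTopologicalAddGroup G]
  [MeasurableSpace G] [BorelSpace G] [R1Space G] {μ : Measure G} [μ.IsAddLeftInvariant]
  [μ.IsNegInvariant] [IsLocallyFiniteMeasure μ] [μ.InnerRegularCompactLTTop] [RCLike 𝕜]
  [NormedAddCommGroup E] [NormedSpace 𝕜 E] [NormedAddCommGroup E'] [NormedSpace 𝕜 E']
  [NormedAddCommGroup F] [NormedSpace 𝕜 F] [NormedSpace ℝ F] [SMulCommClass ℝ 𝕜 F]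
  [CompleteSpace F]

theorem continuous_convolution_of_memLp_of_ne_top {p q : ℝ≥0∞} [p.HolderConjugate q] (hq : q ≠ ∞)
    {f : G → E} {g : G → E'} (L : E →L[𝕜] E' →L[𝕜] F) (hf : MemLp f p μ) (hg : MemLp g q μ) :
    Continuous (f ⋆[L, μ] g) := by
  have : Fact (1 ≤ p) := ⟨ENNReal.HolderConjugate.one_le p q⟩
  have : Fact (1 ≤ q) := ⟨ENNReal.HolderConjugate.one_le q p⟩
  have : Fact (q ≠ ∞) := ⟨hq⟩
  have hg' : MemLp (fun t => g (-t)) q μ :=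
    hg.comp_measurePreserving (Measure.measurePreserving_neg μ)
  -- For `q < ∞` translation acts continuously on `L^q`, so it suffices to write the convolution as
  -- the pairing of `f` with a translate of `g ∘ (-·)`.
  have hpairing : f ⋆[L, μ] g = fun x : G =>
      L.lpPairing μ p q (hf.toLp f) (DomAddAct.mk (-x) +ᵥ hg'.toLp _) := by
    funext x
    rw [L.lpPairing_eq_integral, convolution_def, DomAddAct.mk_vadd_toLp]
    refine integral_congr_ae ?_
    filter_upwards [hf.coeFn_toLp, MemLp.coeFn_toLp
      (hg'.comp_measurePreserving (measurePreserving_vadd (-x) μ))] with t ht ht'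
    rw [ht]
    refine congrArg _ (Eq.trans ?_ ht'.symm)
    simp [sub_eq_neg_add]
  rw [hpairing]
  have : Continuous fun x : G => DomAddAct.mk (-x) +ᵥ hg'.toLp _ :=
    (DomAddAct.continuous_mk.comp continuous_neg).vadd continuous_const
  fun_prop

theorem continuous_convolution_of_memLp {p q : ℝ≥0∞} [p.HolderConjugate q] {f : G → E}
    {g : G → E'} (L : E →L[𝕜] E' →L[𝕜] F) (hf : MemLp f p μ) (hg : MemLp g q μ) :
    Continuous (f ⋆[L, μ] g) := by
  have := ENNReal.HolderConjugate.symm (p := p) (q := q)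
  by_cases hq : q = ∞
  · have hp : p ≠ ∞ := by
      rw [ENNReal.HolderConjugate.ne_top_iff_ne_one p q, hq]
      exact ENNReal.top_ne_one
    rw [← convolution_flip]
    exact continuous_convolution_of_memLp_of_ne_top hp L.flip hg hf
  · exact continuous_convolution_of_memLp_of_ne_top hq L hf hg

end Convolution

section Circle

variable {T : ℝ} [hT : Fact (0 < T)] {E : Type*} [NormedAddCommGroup E] [NormedSpace ℂ E]

theorem sum_fourierCoeff_sub {f : AddCircle T → E} (hf : Integrable f haarAddCircle)
    (s : Finset ℤ) :
    ∑ j ∈ s, ∑ k ∈ s, fourierCoeff f (j - k) =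
      ∫ x, ((‖∑ j ∈ s, fourier j x‖ ^ 2 : ℝ) : ℂ) • f x ∂haarAddCircle := by
  have hexpand (x : AddCircle T) : ((‖∑ j ∈ s, fourier j x‖ ^ 2 : ℝ) : ℂ) • f x =
      ∑ j ∈ s, ∑ k ∈ s, fourier (-(j - k)) x • f x := by
    push_cast
    simp_rw [← Complex.conj_mul', map_sum, Finset.sum_mul_sum, Finset.sum_smul, neg_sub,
      sub_eq_neg_add, fourier_add, fourier_neg]
  simp_rw [hexpand]
  rw [integral_finsetSum _ fun j _ => integrable_finsetSum _ fun k _ => hf.fourier_smul _]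
  refine Finset.sum_congr rfl fun j _ => ?_
  rw [integral_finsetSum _ fun k _ => hf.fourier_smul _]
  rfl

theorem fourierCoeff_one (n : ℤ) :
    fourierCoeff (1 : AddCircle T → ℂ) n = if n = 0 then 1 else 0 := by
  have h : (1 : AddCircle T → ℂ) = fourier 0 := by ext; simp
  rw [h, fourierCoeff_fourier, Pi.single_apply]

theorem integral_norm_sum_fourier_sq (s : Finset ℤ) :
    ∫ x : AddCircle T, ‖∑ j ∈ s, fourier j x‖ ^ 2 ∂haarAddCircle = s.card := by
  have h := sum_fourierCoeff_sub (T := T) (f := (1 : AddCircle T → ℂ)) (integrable_const 1) s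
  simp only [fourierCoeff_one, sub_eq_zero, Pi.one_apply, smul_eq_mul, mul_one,
    integral_complex_ofReal] at h
  simpa [← Complex.ofReal_inj] using h.symm

theorem norm_sum_fourierCoeff_sub_le {f : AddCircle T → E} (hf : MemLp f ∞ haarAddCircle)
    (s : Finset ℤ) :
    ‖∑ j ∈ s, ∑ k ∈ s, fourierCoeff f (j - k)‖ ≤ s.card * lpNorm f ∞ haarAddCircle := by
  rw [sum_fourierCoeff_sub (hf.integrable le_top), ← integral_norm_sum_fourier_sq (T := T),
    ← integral_mul_const]
  have hcont : Continuous fun x : AddCircle T => ‖∑ j ∈ s, (fourier j x : ℂ)‖ ^ 2 := by fun_prop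
  refine norm_integral_le_of_norm_le ((hcont.integrable_of_hasCompactSupport
    (.of_compactSpace _)).mul_const _) ?_
  filter_upwards [ae_le_lpNorm_exponent_top hf] with x hx
  rw [norm_smul, Complex.norm_of_nonneg (by positivity)]
  gcongr

theorem summable_fourierCoeff_of_nonneg {f : AddCircle T → ℂ}
    (hf : MemLp f ∞ haarAddCircle) (h0 : ∀ n, 0 ≤ fourierCoeff f n) :
    Summable (fourierCoeff f) := by
  refine .of_norm <| summable_of_sum_le (c := 2 * lpNorm f ∞ haarAddCircle)
    (fun _ => norm_nonneg _) fun u => ?_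
  obtain ⟨N, hN⟩ : ∃ N : ℕ, u ⊆ Finset.Icc (-N : ℤ) N := by
    refine ⟨u.sup Int.natAbs, fun n hn => ?_⟩
    have := Finset.le_sup (f := Int.natAbs) hn
    rw [Finset.mem_Icc]
    lia
  have hcard : (Finset.Icc (-(2 * N) : ℤ) (2 * N)).card = 4 * N + 1 := by
    rw [Int.card_Icc]
    lia
  have hle := (mul_sum_le_sum_sum_sub (fun n => norm_nonneg (fourierCoeff f n)) hN).trans_eq <|
    (Complex.norm_of_nonneg (by positivity)).symm
  push_cast [← Complex.eq_coe_norm_of_nonneg (h0 _)] at hle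
  have hbound := hle.trans (norm_sum_fourierCoeff_sub_le hf _)
  rw [hcard] at hbound
  push_cast at hbound
  have := lpNorm_nonneg (f := f) (p := ∞) (μ := haarAddCircle)
  -- The factor `2` in the bound comes from `4 * N + 1 ≤ 2 * (2 * N + 1)`.
  nlinarith

theorem hasSum_fourierCoeff_of_nonneg (f : C(AddCircle T, ℂ)) (h0 : ∀ n, 0 ≤ fourierCoeff f n) :
    HasSum (fourierCoeff f) (f 0) := by
  have hf : MemLp f ∞ haarAddCircle :=
    f.continuous.memLp_of_hasCompactSupport (.of_compactSpace _)
  simpa using has_pointwise_sum_fourier_series_of_summable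
    (summable_fourierCoeff_of_nonneg hf h0) 0

theorem fourierCoeff_convolution {f g : AddCircle T → ℂ}
    (hf : Integrable f haarAddCircle) (hg : Integrable g haarAddCircle) :
    fourierCoeff (f ⋆[.mul ℂ ℂ, haarAddCircle] g) = fourierCoeff f * fourierCoeff g := by
  funext n
  have htwist (x : AddCircle T) :
      fourier (-n) x • (f ⋆[.mul ℂ ℂ, haarAddCircle] g) x =
        ((fun t => fourier (-n) t • f t) ⋆[.mul ℂ ℂ, haarAddCircle]
          fun t => fourier (-n) t • g t) x := by
    simp only [convolution_mul, smul_eq_mul, ← integral_const_mul]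
    refine integral_congr_ae (.of_forall fun t => ?_)
    have : (fourier (-n) x : ℂ) = fourier (-n) t * fourier (-n) (x - t) := by
      simp only [fourier_apply, ← Circle.coe_mul, ← toCircle_add, ← smul_add, add_sub_cancel]
    simp only [this]
    ring
  simp only [fourierCoeff, htwist, Pi.mul_apply]
  exact integral_convolution _ (hf.fourier_smul _) (hg.fourier_smul _)

theorem fourierCoeff_fourier_mul_comp_neg (g : AddCircle T → ℂ) (m n : ℤ) :
    fourierCoeff (fun t => fourier n t * g (-t)) m = fourierCoeff g (n - m) := by
  simp only [fourierCoeff]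
  rw [← integral_neg_eq_self]
  refine integral_congr_ae (.of_forall fun t => ?_)
  simp only [neg_neg, smul_eq_mul, ← mul_assoc, ← fourier_add]
  congr 1
  simp [sub_eq_neg_add, mul_comm]

theorem hasSum_fourierCoeff_mul {f g : AddCircle T → ℂ} {p q : ℝ≥0∞} [p.HolderConjugate q]
    (hf : MemLp f p haarAddCircle) (hg : MemLp g q haarAddCircle)
    (hf0 : ∀ m, 0 ≤ fourierCoeff f m) (hg0 : ∀ m, 0 ≤ fourierCoeff g m) (n : ℤ) :
    HasSum (fun m => fourierCoeff f m * fourierCoeff g (n - m)) (fourierCoeff (f * g) n) := by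
  let G : AddCircle T → ℂ := fun t => fourier n t * g (-t)
  have hneg := hg.comp_measurePreserving (Measure.measurePreserving_neg haarAddCircle)
  have hG : MemLp G q haarAddCircle :=
    hneg.of_le ((fourier n).continuous.aestronglyMeasurable.mul hneg.1)
      (by simp [G, Circle.norm_coe])
  let h : C(AddCircle T, ℂ) :=
    ⟨f ⋆[.mul ℂ ℂ, haarAddCircle] G, continuous_convolution_of_memLp _ hf hG⟩
  have hcoeff (m : ℤ) : fourierCoeff h m = fourierCoeff f m * fourierCoeff g (n - m) := by
    rw [← fourierCoeff_fourier_mul_comp_neg]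
    exact congrFun (fourierCoeff_convolution
      (hf.integrable (ENNReal.HolderConjugate.one_le p q))
      (hG.integrable (ENNReal.HolderConjugate.one_le q p))) m
  have hzero : h 0 = fourierCoeff (f * g) n := by
    change (f ⋆[.mul ℂ ℂ, haarAddCircle] G) 0 = _
    simp only [convolution_mul, fourierCoeff, G]
    refine integral_congr_ae (.of_forall fun t => ?_)
    have hflip : (fourier n (-t) : ℂ) = fourier (-n) t := by simp [fourier_apply]
    simp only [zero_sub, neg_neg, smul_eq_mul, Pi.mul_apply, hflip]
    ring
  have := hasSum_fourierCoeff_of_nonneg h fun m => hcoeff m ▸ mul_nonneg (hf0 m) (hg0 _)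
  rwa [hzero, funext hcoeff] at this

theorem hasSum_fourierCoeff_prod {k : ℕ} {f : Fin k → AddCircle T → ℂ} {p : Fin k → ℝ≥0∞}
    (hsum : ∑ i, (p i)⁻¹ ≤ 1) (hf : ∀ i, MemLp (f i) (p i) haarAddCircle)
    (h0 : ∀ i m, 0 ≤ fourierCoeff (f i) m) (n : ℤ) :
    HasSum (fun v : {v : Fin k → ℤ // ∑ i, v i = n} => ∏ i, fourierCoeff (f i) (v.1 i))
      (fourierCoeff (∏ i, f i) n) := by
  induction k generalizing n with
  | zero =>
    obtain rfl | hn := eq_or_ne n 0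
    · simpa [fourierCoeff_one] using
        hasSum_fintype fun _ : {v : Fin 0 → ℤ // ∑ i, v i = 0} => (1 : ℂ)
    · have : IsEmpty {v : Fin 0 → ℤ // ∑ i, v i = n} := ⟨fun v => hn (by simpa using v.2.symm)⟩
      simp [fourierCoeff_one, hn]
  | succ k ih =>
    rw [Fin.sum_univ_castSucc] at hsum
    have hlast : (p (.last k))⁻¹ ≤ 1 := le_of_add_le_right hsum
    have hprod : MemLp (∏ i : Fin k, f i.castSucc) (1 - (p (.last k))⁻¹)⁻¹ haarAddCircle :=
      (MemLp.prod fun i _ => hf i.castSucc).mono_exponent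
        (ENNReal.inv_le_inv.2 (ENNReal.le_sub_of_add_le_right
          (ne_top_of_le_ne_top ENNReal.one_ne_top hlast) hsum))
    have := ENNReal.HolderConjugate.inv_one_sub_inv' (ENNReal.inv_le_one.1 hlast)
    have := ENNReal.HolderConjugate.symm (p := p (.last k)) (q := (1 - (p (.last k))⁻¹)⁻¹)
    have htail (m : ℤ) := ih (le_of_add_le_left hsum)
      (fun i => hf i.castSucc) (fun i => h0 i.castSucc) m
    have hnonneg (m : ℤ) : 0 ≤ fourierCoeff (∏ i : Fin k, f i.castSucc) m :=
      (htail m).nonneg fun v => Finset.prod_nonneg fun i _ => h0 _ _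
    have hmul := hasSum_fourierCoeff_mul hprod (hf (.last k)) hnonneg (h0 _) n
    rw [Fin.prod_univ_castSucc]
    exact hasSum_prod_hyperplane_succ h0 htail hmul

end Circle

theorem hasSum_fourierCoeffOn_pow {a b : ℝ} (hab : a < b) {f : ℝ → ℂ} {r : ℕ}
    (hf : MemLp f r (volume.restrict (Ioc a b))) (h0 : ∀ m, 0 ≤ fourierCoeffOn hab f m) (n : ℤ) :
    HasSum (fun v : {v : Fin r → ℤ // ∑ i, v i = n} => ∏ i, fourierCoeffOn hab f (v.1 i))
      (fourierCoeffOn hab (f ^ r) n) := by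
  have : Fact (0 < b - a) := ⟨sub_pos.2 hab⟩
  have hf' : MemLp (liftIoc (b - a) a f) r haarAddCircle :=
    MemLp.haarAddCircle (MemLp.memLp_liftIoc (by rwa [add_sub_cancel]))
  have hprod := hasSum_fourierCoeff_prod (f := fun _ : Fin r => liftIoc (b - a) a f)
    (p := fun _ => r) (by simp [ENNReal.mul_inv_le_one]) (fun _ => hf') (fun _ => h0) n
  rwa [Finset.prod_const, Finset.card_univ, Fintype.card_fin] at hprod

theorem integral_exp_mul_eq_two_pi_mul_fourierCoeffOn (f : ℝ → ℂ) (m : ℤ) :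
    ∫ x in Icc (-π) π, Complex.exp (m * x * Complex.I) * f x =
      2 * π * fourierCoeffOn (neg_lt_self pi_pos) f (-m) := by
  rw [fourierCoeffOn_eq_integral, intervalIntegral.integral_of_le (neg_lt_self pi_pos).le,
    integral_Icc_eq_integral_Ioc, neg_neg]
  have hexp (x : ℝ) : fourier m (x : AddCircle (π - -π)) = Complex.exp (m * x * Complex.I) := by
    rw [fourier_coe_apply]
    push_cast
    congr 1
    field_simp
    ring
  have h2π : (2 * π : ℂ) ≠ 0 := by exact_mod_cast two_pi_pos.ne'
  have hlen : ((1 / (π - -π) : ℝ) : ℂ) = (2 * (π : ℂ))⁻¹ := by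
    push_cast
    ring
  simp only [hexp, smul_eq_mul, Complex.real_smul, hlen, mul_inv_cancel_left₀ h2π]

theorem constrained_fourier_sum_eq_parseval_general (r : ℕ) (hr : 1 ≤ r) (p : ℝ → ℂ)
    (hp : MemLp p r (volume.restrict (Icc (-π) π))) (a : ℤ → ℂ)
    (ha : ∀ m : ℤ, a m = ∫ x in Icc (-π) π, Complex.exp (m * x * Complex.I) * p x)
    (hpos : ∀ m : ℤ, 0 ≤ a m) :
    HasSum (fun v : {v : Fin r → ℤ // ∑ i, v i = 0} => ∏ k, a (v.1 k))
      ((2 * π) ^ (r - 1) * ∫ x in Icc (-π) π, p x ^ r) := by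
  have hcoeff (m : ℤ) : a m = 2 * π * fourierCoeffOn (neg_lt_self pi_pos) p (-m) :=
    (ha m).trans (integral_exp_mul_eq_two_pi_mul_fourierCoeffOn p m)
  have hzero : ∫ x in Icc (-π) π, p x ^ r =
      2 * π * fourierCoeffOn (neg_lt_self pi_pos) (p ^ r) 0 := by
    simpa using integral_exp_mul_eq_two_pi_mul_fourierCoeffOn (p ^ r) 0
  have hnonneg (m : ℤ) : 0 ≤ fourierCoeffOn (neg_lt_self pi_pos) p m := by
    have hinv : fourierCoeffOn (neg_lt_self pi_pos) p m = (2 * (π : ℂ))⁻¹ * a (-m) := by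
      rw [hcoeff, neg_neg]
      field_simp
    exact hinv ▸ mul_nonneg (by positivity) (hpos _)
  have hsum := (hasSum_fourierCoeffOn_pow (neg_lt_self pi_pos)
    (hp.mono_measure (Measure.restrict_mono_set _ Ioc_subset_Icc_self)) hnonneg 0).mul_left
    ((2 * π : ℂ) ^ r)
  let negEquiv : {v : Fin r → ℤ // ∑ i, v i = 0} ≃ {v : Fin r → ℤ // ∑ i, v i = 0} :=
    (Equiv.neg _).subtypeEquiv fun v => by simp
  rw [hzero, ← mul_assoc, pow_sub_one_mul (by lia)]
  refine negEquiv.hasSum_iff.1 ?_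
  simpa [Function.comp_def, negEquiv, hcoeff, Finset.prod_mul_distrib] using hsum

theorem constrained_fourier_sum_eq_parseval (r : ℕ) (hr : 1 ≤ r)
    (p : ℝ → ℝ)
    (hp0 : ∀ x, 0 ≤ p x)
    (hint : IntegrableOn p (Icc (-π) π))
    (hprob : (∫ x in Icc (-π) π, p x) = 1)
    (hLr : IntegrableOn (fun x => p x ^ r) (Icc (-π) π))
    (a : ℤ → ℂ)
    (ha : ∀ m : ℤ, a m = ∫ x in Icc (-π) π, Complex.exp (m * x * Complex.I) * (p x : ℂ))
    (hpos : ∀ m : ℤ, 0 ≤ (a m).re ∧ (a m).im = 0) :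
    HasSum (fun v : {v : Fin r → ℤ // ∑ i, v i = 0} => ∏ k, a (v.1 k))
      (((2 * π) ^ (r - 1) * ∫ x in Icc (-π) π, p x ^ r : ℝ) : ℂ) := by
  have hp := ((memLp_natCast_iff_integrable_pow (by lia) hint.1).2 hLr).ofReal (K := ℂ)
  simpa [← integral_complex_ofReal] using constrained_fourier_sum_eq_parseval_general r hr _ hp a
    ha fun m => Complex.nonneg_iff.2 ⟨(hpos m).1, (hpos m).2.symm⟩
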